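/- In 𝔽_3[T], the partial sums Σ_{m=0}^{M} Σ_{a∈A_m} a^{13} are eventually constant in M, with eventual value β(13) = −T^9 − T^3 − T + 1, and the polynomial P = T^3 − T^2 + 1 divides β(13). -/

import Mathlib

open Polynomial

/-!
Let `q = #F`. A monic polynomial of degree `m` over `F` is an affine function of its `m` lower
coefficients, and the Frobenius `x ↦ x ^ q` fixes these coefficients. Hence the power `a ^ n` is a
polynomial in them of total degree at most the sum of the base-`q` digits of `n`, and as soon as
this sum is below `(q - 1) * m`, the Chevalley–Warning argument makes the sum of `a ^ n` vanish.
For `q = 3` the digits of `13` are `1, 1, 1`, so only `m = 0` and `m = 1` contribute to `β(13)`.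
-/

section PowerSumsOverFiniteFields

variable {F : Type*} [Field F] [Fintype F] {A : Type*} [CommRing A] [Algebra F A] {σ : Type*}

theorem sum_eval_algebraMap_eq_zero [Fintype σ] [DecidableEq σ] (f : MvPolynomial σ A)
    (h : f.totalDegree < (Fintype.card F - 1) * Fintype.card σ) :
    ∑ c : σ → F, f.eval (fun i ↦ algebraMap F A (c i)) = 0 := by
  have sum_monomial {d : σ →₀ ℕ} (hd : d ∈ f.support) : ∑ c : σ → F, ∏ i, c i ^ d i = 0 := by
    have hdeg : (MvPolynomial.monomial d (1 : F)).totalDegree ≤ f.totalDegree := by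
      rw [MvPolynomial.totalDegree_monomial d one_ne_zero]
      exact MvPolynomial.le_totalDegree hd
    simpa [MvPolynomial.eval_monomial, Finsupp.prod_fintype] using
      MvPolynomial.sum_eval_eq_zero (MvPolynomial.monomial d (1 : F)) (hdeg.trans_lt h)
  calc
    ∑ c : σ → F, f.eval (fun i ↦ algebraMap F A (c i))
      = ∑ d ∈ f.support, f.coeff d * algebraMap F A (∑ c : σ → F, ∏ i, c i ^ d i) := by
        simp only [MvPolynomial.eval_eq', map_sum, map_prod, map_pow, Finset.mul_sum]
        exact Finset.sum_comm
    _ = 0 := Finset.sum_eq_zero fun d hd ↦ by rw [sum_monomial hd, map_zero, mul_zero]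

theorem eval_map_frobeniusAlgHom (f : MvPolynomial σ A) (c : σ → F) :
    (f.map (FiniteField.frobeniusAlgHom F A : A →+* A)).eval (fun i ↦ algebraMap F A (c i)) =
      f.eval (fun i ↦ algebraMap F A (c i)) ^ Fintype.card F := by
  rw [MvPolynomial.eval_map, ← FiniteField.frobeniusAlgHom_apply,
    ← AlgHom.coe_toRingHom, MvPolynomial.eval₂_comp]
  congr 1
  funext i
  simp only [Function.comp_apply, AlgHom.coe_toRingHom, AlgHom.commutes]

theorem exists_eval_eq_pow_ofDigits (f : MvPolynomial σ A) (digits : List ℕ) :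
    ∃ g : MvPolynomial σ A, g.totalDegree ≤ digits.sum * f.totalDegree ∧
      ∀ c : σ → F, g.eval (fun i ↦ algebraMap F A (c i)) =
        f.eval (fun i ↦ algebraMap F A (c i)) ^ Nat.ofDigits (Fintype.card F) digits := by
  induction digits with
  | nil => exact ⟨1, by simp, by simp⟩
  | cons d digits ih =>
    obtain ⟨g, hdeg, heval⟩ := ih
    refine ⟨f ^ d * g.map (FiniteField.frobeniusAlgHom F A : A →+* A), ?_, fun c ↦ ?_⟩
    · calc
        _ ≤ (f ^ d).totalDegree + _ := MvPolynomial.totalDegree_mul _ _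
        _ ≤ d * f.totalDegree + digits.sum * f.totalDegree :=
          add_le_add (MvPolynomial.totalDegree_pow f d)
            ((Finset.sup_mono (MvPolynomial.support_map_subset _ g)).trans hdeg)
        _ = (d :: digits).sum * f.totalDegree := by rw [List.sum_cons, add_mul]
    · rw [map_mul, map_pow, eval_map_frobeniusAlgHom, heval, Nat.ofDigits_cons, pow_add, pow_mul']

theorem sum_eval_pow_eq_zero_of_digits_sum_lt [Fintype σ] [DecidableEq σ] (f : MvPolynomial σ A)
    (n : ℕ)
    (h : (Nat.digits (Fintype.card F) n).sum * f.totalDegree <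
      (Fintype.card F - 1) * Fintype.card σ) :
    ∑ c : σ → F, f.eval (fun i ↦ algebraMap F A (c i)) ^ n = 0 := by
  obtain ⟨g, hdeg, heval⟩ := exists_eval_eq_pow_ofDigits (F := F) f (Nat.digits (Fintype.card F) n)
  rw [Nat.ofDigits_digits] at heval
  simp only [← heval, sum_eval_algebraMap_eq_zero g (hdeg.trans_lt h)]

end PowerSumsOverFiniteFields

section MonicPowerSums

/-- The power sum `S_m(n) = Σ_{a ∈ A_m} a ^ n` over the set `A_m` of monic polynomials of degree
`m`, so that `β(n) = Σ_m S_m(n)`. It is a `finsum`, hence `0` by convention if infinitely many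
terms are nonzero. -/
noncomputable def monicPowerSum (R : Type*) [Semiring R] (m n : ℕ) : R[X] :=
  ∑ᶠ a ∈ {a : R[X] | a.Monic ∧ a.natDegree = m}, a ^ n

/-- The generic monic polynomial `X ^ m + Σ_{i < m} c_i X ^ i`, as a polynomial in its lower
coefficients `c_i` with coefficients in `R[X]`. -/
noncomputable def genericMonic (R : Type*) [CommSemiring R] (m : ℕ) : MvPolynomial (Fin m) R[X] :=
  MvPolynomial.C (X ^ m) + ∑ i : Fin m, MvPolynomial.C (X ^ (i : ℕ)) * MvPolynomial.X i

theorem totalDegree_genericMonic_le (R : Type*) [CommSemiring R] (m : ℕ) :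
    (genericMonic R m).totalDegree ≤ 1 := by
  refine (MvPolynomial.totalDegree_add _ _).trans (max_le ?_ ?_)
  · rw [MvPolynomial.totalDegree_C]
    exact zero_le_one
  · refine MvPolynomial.totalDegree_finsetSum_le fun i _ ↦ ?_
    rw [MvPolynomial.C_mul_X_eq_monomial]
    exact (MvPolynomial.totalDegree_monomial_le _ _).trans (by simp)

theorem eval_genericMonic {R : Type*} [CommSemiring R] {m : ℕ} (c : Fin m → R) :
    (genericMonic R m).eval (fun i ↦ C (c i)) = X ^ m + ∑ i : Fin m, C (c i) * X ^ (i : ℕ) := by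
  simp [genericMonic, X_pow_mul]

theorem monicPowerSum_eq_sum {R : Type*} [Ring R] [Fintype R] (m n : ℕ) :
    monicPowerSum R m n =
      ∑ c : Fin m → R, (X ^ m + ∑ i : Fin m, C (c i) * X ^ (i : ℕ)) ^ n := by
  nontriviality R
  let e : (Fin m → R) ≃ {a : R[X] // a.Monic ∧ a.natDegree = m} :=
    ((monicEquivDegreeLT m).trans (degreeLTEquiv R m).toEquiv).symm
  have coe_e (c : Fin m → R) : (e c : R[X]) = X ^ m + ∑ i : Fin m, C (c i) * X ^ (i : ℕ) := by
    simp [e, monicEquivDegreeLT, degreeLTEquiv, C_mul_X_pow_eq_monomial]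
  calc
    monicPowerSum R m n = ∑ᶠ a : {a : R[X] // a.Monic ∧ a.natDegree = m}, (a : R[X]) ^ n :=
      (finsum_set_coe_eq_finsum_mem _).symm
    _ = ∑ᶠ c, (e c : R[X]) ^ n := (finsum_comp_equiv e).symm
    _ = _ := by simp only [coe_e, finsum_eq_sum_of_fintype]

theorem monicPowerSum_eq_zero_of_digits_sum_lt {F : Type*} [Field F] [Fintype F] {m n : ℕ}
    (h : (Nat.digits (Fintype.card F) n).sum < (Fintype.card F - 1) * m) :
    monicPowerSum F m n = 0 := by
  have hdeg : (Nat.digits (Fintype.card F) n).sum * (genericMonic F m).totalDegree <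
      (Fintype.card F - 1) * Fintype.card (Fin m) := by
    rw [Fintype.card_fin]
    exact (mul_le_of_le_one_right' (totalDegree_genericMonic_le F m)).trans_lt h
  simpa only [monicPowerSum_eq_sum, eval_genericMonic, algebraMap_eq] using
    sum_eval_pow_eq_zero_of_digits_sum_lt (genericMonic F m) n hdeg

theorem monicPowerSum_zero {R : Type*} [Semiring R] (n : ℕ) : monicPowerSum R 0 n = 1 := by
  have monic_natDegree_zero : {a : R[X] | a.Monic ∧ a.natDegree = 0} = {1} := by
    ext a
    exact ⟨fun ⟨monic, degree⟩ ↦ monic.natDegree_eq_zero.mp degree, by rintro rfl; simp⟩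
  rw [monicPowerSum, monic_natDegree_zero, finsum_mem_singleton, one_pow]

theorem monicPowerSum_one {R : Type*} [Ring R] [Fintype R] (n : ℕ) :
    monicPowerSum R 1 n = ∑ c : R, (X + C c) ^ n := by
  rw [monicPowerSum_eq_sum, ← (Equiv.funUnique (Fin 1) R).symm.sum_comp]
  simp

end MonicPowerSums

section CharThree

variable {A : Type*} [CommRing A] [Algebra (ZMod 3) A]

theorem sum_add_algebraMap_mul_mul (u v w : A) :
    ∑ c : ZMod 3, (u + algebraMap (ZMod 3) A c) * (v + algebraMap (ZMod 3) A c) *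
      (w + algebraMap (ZMod 3) A c) = -(u + v + w) := by
  have univ_eq : (Finset.univ : Finset (ZMod 3)) = {0, 1, -1} := by decide
  have three_eq_zero : (3 : A) = 0 := by
    rw [← map_ofNat (algebraMap (ZMod 3) A) 3, CharP.ofNat_eq_zero (ZMod 3) 3, map_zero]
  rw [univ_eq, Finset.sum_insert (by decide), Finset.sum_insert (by decide), Finset.sum_singleton]
  simp only [map_zero, map_one, map_neg]
  linear_combination (u * v * w + u + v + w) * three_eq_zero

theorem sum_add_algebraMap_pow_thirteen (u : A) :
    ∑ c : ZMod 3, (u + algebraMap (ZMod 3) A c) ^ 13 = -(u + u ^ 3 + u ^ 9) := by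
  have add_pow_three (x : A) (c : ZMod 3) :
      (x + algebraMap (ZMod 3) A c) ^ 3 = x ^ 3 + algebraMap (ZMod 3) A c := by
    simpa using map_add (FiniteField.frobeniusAlgHom (ZMod 3) A) x (algebraMap (ZMod 3) A c)
  rw [← sum_add_algebraMap_mul_mul]
  refine Finset.sum_congr rfl fun c _ ↦ ?_
  calc
    (u + algebraMap (ZMod 3) A c) ^ 13
      = (u + algebraMap (ZMod 3) A c) * (u + algebraMap (ZMod 3) A c) ^ 3 *
          ((u + algebraMap (ZMod 3) A c) ^ 3) ^ 3 := by ring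
    _ = (u + algebraMap (ZMod 3) A c) * (u ^ 3 + algebraMap (ZMod 3) A c) *
          (u ^ 9 + algebraMap (ZMod 3) A c) := by
      rw [add_pow_three, add_pow_three, ← pow_mul]

end CharThree

theorem monicPowerSum_one_thirteen :
    monicPowerSum (ZMod 3) 1 13 = -(X + X ^ 3 + X ^ 9) := by
  rw [monicPowerSum_one]
  exact sum_add_algebraMap_pow_thirteen X

theorem monicPowerSum_thirteen_eq_zero {m : ℕ} (hm : 2 ≤ m) : monicPowerSum (ZMod 3) m 13 = 0 := by
  refine monicPowerSum_eq_zero_of_digits_sum_lt ?_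
  rw [ZMod.card]
  calc
    (Nat.digits 3 13).sum = 3 := by norm_num
    _ < (3 - 1) * m := by lia

/-- In `𝔽_3[T]`, the partial sums `Σ_{m=0}^{M} Σ_{a ∈ A_m} a^13` are eventually constant in
`M`, with eventual value `β(13) = −T^9 − T^3 − T + 1`, and `P = T^3 − T^2 + 1` divides
`β(13)`. -/
theorem stmt_9 :
    (∃ M₀ : ℕ, ∀ M ≥ M₀,
      (∑ m ∈ Finset.range (M + 1),
        ∑ᶠ a ∈ {a : Polynomial (ZMod 3) | a.Monic ∧ a.natDegree = m}, a ^ 13) =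
        (-X ^ 9 - X ^ 3 - X + 1 : Polynomial (ZMod 3))) ∧
    (X ^ 3 - X ^ 2 + 1 : Polynomial (ZMod 3)) ∣ (-X ^ 9 - X ^ 3 - X + 1) := by
  refine ⟨⟨1, fun M hM ↦ ?_⟩, -X ^ 6 - X ^ 5 - X ^ 4 + X ^ 2 - X + 1, ?_⟩
  · calc
      _ = ∑ m ∈ Finset.range (M + 1), monicPowerSum (ZMod 3) m 13 := rfl
      _ = ∑ m ∈ Finset.range 2, monicPowerSum (ZMod 3) m 13 :=
        Finset.eventually_constant_sum (fun _ ↦ monicPowerSum_thirteen_eq_zero) (by lia)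
      _ = 1 + -(X + X ^ 3 + X ^ 9) := by
        rw [Finset.sum_range_succ, Finset.sum_range_one, monicPowerSum_zero,
          monicPowerSum_one_thirteen]
      _ = -X ^ 9 - X ^ 3 - X + 1 := by ring
  · have three_eq_zero : (3 : (ZMod 3)[X]) = 0 := CharP.ofNat_eq_zero (ZMod 3)[X] 3
    linear_combination (X ^ 4 - X ^ 3) * three_eq_zero
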